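/- Under the Pólya urn hypotheses, assume sup_n ‖X_{n+1} − X_n‖_p < ∞ for every p ≥ 2, that Re λ₂ < b/2 (where λ₂ is a second-largest eigenvalue of A in real part, λ₁ = b being the largest), and that (X_n − E X_n)/√n converges in distribution as n → ∞ to the centered Gaussian law N(0, Σ) on ℝ^q for some covariance matrix Σ. Then the convergence holds with convergence of all moments: for every real r ≥ 1, E|(X_n − E X_n)/√n|^r → E|Z|^r, and for every multi-index α ∈ ℕ^q, E[∏_{j=1}^q ((X_{n,j} − E X_{n,j})/√n)^{α_j}] → E[∏_{j=1}^q Z_j^{α_j}], where Z ~ N(0, Σ). In particular, the covariance matrices satisfy Cov(X_n)/n → Σ entrywise. -/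

import Mathlib

open MeasureTheory Matrix Filter

/-- `P` is the spectral projection of `A` for the eigenvalue `lam`: it is the identity
on the generalized eigenspace E_lam = ker((A − lam I)^q) and vanishes on the generalized
eigenspace E_mu = ker((A − mu I)^q) of every other eigenvalue `mu`. Since ℂ^q is the
direct sum of the generalized eigenspaces, these conditions determine `P` uniquely. -/
def IsSpectralProj {q : ℕ} (A : Matrix (Fin q) (Fin q) ℂ) (lam : ℂ)
    (P : Matrix (Fin q) (Fin q) ℂ) : Prop :=
  (∀ v : Fin q → ℂ, ((A - lam • 1) ^ q).mulVec v = 0 → P.mulVec v = v) ∧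
  ∀ mu : ℂ, mu ≠ lam → ∀ v : Fin q → ℂ, ((A - mu • 1) ^ q).mulVec v = 0 → P.mulVec v = 0

/-- `ν` is the nilpotency index ν_lam of N_lam := (A − lam I) P_lam, i.e. the unique
integer ν ≥ 0 with N_lam^(ν+1) = 0 and (ν = 0 or N_lam^ν ≠ 0). -/
def NilIndexOf {q : ℕ} (A : Matrix (Fin q) (Fin q) ℂ) (lam : ℂ)
    (P : Matrix (Fin q) (Fin q) ℂ) (ν : ℕ) : Prop :=
  ((A - lam • 1) * P) ^ (ν + 1) = 0 ∧ (ν = 0 ∨ ((A - lam • 1) * P) ^ ν ≠ 0)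

/-- `mu` is a candidate for the second eigenvalue λ₂ in the ordered listing
λ₁, λ₂, …, λ_q of the eigenvalues of `Ac` with algebraic multiplicity (λ₁ = b being
first): either `mu` is an eigenvalue different from b, or `mu = b` and b occurs with
algebraic multiplicity at least 2. -/
def MemSecondEigSet {q : ℕ} (Ac : Matrix (Fin q) (Fin q) ℂ) (b : ℝ) (mu : ℂ) : Prop :=
  (mu ≠ (b : ℂ) ∧ mu ∈ spectrum ℂ Ac) ∨
  (mu = (b : ℂ) ∧ 2 ≤ Polynomial.rootMultiplicity (b : ℂ) (Matrix.charpoly Ac))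

lemma urn_charpoly {q : ℕ} (A : Matrix (Fin q) (Fin q) ℂ) (a v : Fin q → ℂ) (b : ℂ)
    (hA : Matrix.vecMul a A = b • a) (hav : a ⬝ᵥ v = b) :
    (Polynomial.X - Polynomial.C b) * (A - vecMulVec v a).charpoly =
      Polynomial.X * A.charpoly := by
  refine Polynomial.eq_of_infinite_eval_eq _ _ ?_
  refine Set.Infinite.mono (s := {b}ᶜ) ?_ (Set.finite_singleton b).infinite_compl
  intro t ht
  have htb : t - b ≠ 0 := sub_ne_zero.2 (by simpa using ht)
  simp only [Set.mem_ofPred_eq, Polynomial.eval_mul, Polynomial.eval_sub, Polynomial.eval_X,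
    Polynomial.eval_C, Matrix.eval_charpoly]
  have e : (scalar (Fin q)) t - (A - vecMulVec v a) =
      (1 + replicateCol Unit ((t - b)⁻¹ • v) * replicateRow Unit a) * (scalar (Fin q) t - A) := by
    rw [← vecMulVec_eq, add_mul, one_mul, vecMulVec_mul, vecMul_sub, hA]
    have : a ᵥ* (scalar (Fin q)) t = t • a := by
      ext i; simp [Matrix.vecMul_diagonal, mul_comm]
    rw [this, ← sub_smul]
    have : vecMulVec ((t - b)⁻¹ • v) ((t - b) • a) = vecMulVec v a := by
      ext i j
      simp [vecMulVec_apply]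
      field_simp
    rw [this]; abel
  rw [e, det_mul, det_one_add_replicateCol_mul_replicateRow, dotProduct_smul, hav, smul_eq_mul]
  field_simp
  ring

lemma urn_spec {q : ℕ} (A : Matrix (Fin q) (Fin q) ℂ) (a v : Fin q → ℂ) (b : ℝ) (hb : 0 < b)
    (hA : Matrix.vecMul a A = (b : ℂ) • a) (hav : a ⬝ᵥ v = b)
    (hsmall : ∀ mu : ℂ, MemSecondEigSet A b mu → mu.re < b / 2) :
    ∀ mu ∈ spectrum ℂ (A - vecMulVec v a), mu.re < b / 2 := by
  intro mu hmu
  have key := urn_charpoly A a v b hA hav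
  rw [Matrix.mem_spectrum_iff_isRoot_charpoly] at hmu
  by_cases h : mu = b
  · refine hsmall mu (Or.inr ⟨h, ?_⟩)
    subst h
    have hne : A.charpoly ≠ 0 := (Matrix.charpoly_monic A).ne_zero
    rw [Polynomial.le_rootMultiplicity_iff hne]
    have h1 : (Polynomial.X - Polynomial.C (b : ℂ)) ^ 2 ∣ Polynomial.X * A.charpoly := by
      rw [← key, pow_two]
      exact mul_dvd_mul_left _ (Polynomial.dvd_iff_isRoot.2 hmu)
    refine IsCoprime.dvd_of_dvd_mul_left ?_ h1
    refine IsCoprime.pow_left ?_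
    have := Polynomial.isCoprime_X_sub_C_of_isUnit_sub (a := (b : ℂ)) (b := 0) (by simp [hb.ne'])
    simpa using this
  · by_cases h0 : mu = 0
    · subst h0; simpa using hb
    · refine hsmall mu (Or.inl ⟨h, ?_⟩)
      rw [Matrix.mem_spectrum_iff_isRoot_charpoly]
      have := congrArg (Polynomial.eval mu) key
      rw [Polynomial.eval_mul, hmu.eq_zero, mul_zero, Polynomial.eval_mul, Polynomial.eval_X] at this
      exact (mul_eq_zero.1 this.symm).resolve_left h0

open scoped Matrix.Norms.L2Operator in
lemma urn_gelfand {q : ℕ} (hq : 0 < q) (B : Matrix (Fin q) (Fin q) ℂ) (c : ℝ) (hc : 0 < c)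
    (hB : ∀ mu ∈ spectrum ℂ B, mu.re < c) :
    ∃ δ β : ℝ, 0 < δ ∧ 0 ≤ β ∧ β < c ∧ ∃ N : ℕ, 0 < N ∧
      ‖(1 + (δ : ℂ) • B) ^ N‖ ≤ (1 + δ * β) ^ N := by
  have : Nonempty (Fin q) := ⟨⟨0, hq⟩⟩
  have hfin : (spectrum ℂ B).Finite := Matrix.finite_spectrum B
  obtain ⟨β0, h0, h0c, hβ0⟩ : ∃ β0 : ℝ, 0 ≤ β0 ∧ β0 < c ∧ ∀ mu ∈ spectrum ℂ B, mu.re ≤ β0 := by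
    obtain ⟨m, hm, hmax⟩ := hfin.exists_maximalFor Complex.re _ (spectrum.nonempty B)
    refine ⟨max m.re 0, le_max_right _ _, max_lt (hB m hm) hc, fun mu hmu => ?_⟩
    refine le_trans ?_ (le_max_left _ _)
    rcases le_total mu.re m.re with h | h
    · exact h
    · exact hmax hmu h
  obtain ⟨L, hL⟩ := (hfin.image norm).bddAbove
  have hL' : ∀ mu ∈ spectrum ℂ B, ‖mu‖ ≤ L := fun mu h => hL ⟨mu, h, rfl⟩
  set β := (β0 + c) / 2 with hβ
  set δ := (c - β0) / (2 * (1 + L^2)) with hδ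
  have hδ0 : 0 < δ := by have : 0 < c - β0 := by linarith
                         positivity
  have hδL : δ * L ^ 2 < c - β0 := by
    rw [hδ, div_mul_eq_mul_div, div_lt_iff₀ (by positivity)]
    nlinarith [sq_nonneg L]
  have hβ0' : 0 ≤ β := by linarith
  refine ⟨δ, β, hδ0, hβ0', by linarith, ?_⟩
  set T : Matrix (Fin q) (Fin q) ℂ := 1 + (δ : ℂ) • B with hT
  have hTs : ∀ z ∈ spectrum ℂ T, ‖z‖ < 1 + δ * β := by
    intro z hz
    have hTp : T = Polynomial.aeval B (Polynomial.C 1 + Polynomial.C (δ : ℂ) * Polynomial.X) := by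
      simp [hT, Algebra.smul_def]
    rw [hTp, spectrum.map_polynomial_aeval] at hz
    obtain ⟨mu, hmu, rfl⟩ := hz
    have h1 := hβ0 mu hmu
    have h2 := hL' mu hmu
    simp only [Polynomial.eval_add, Polynomial.eval_mul, Polynomial.eval_C, Polynomial.eval_X]
    refine lt_of_pow_lt_pow_left₀ 2 (by positivity) ?_
    rw [Complex.sq_norm, Complex.normSq_apply]
    have h3 : mu.re ^ 2 + mu.im ^ 2 ≤ L ^ 2 := by
      have := pow_le_pow_left₀ (norm_nonneg mu) h2 2
      rw [Complex.sq_norm, Complex.normSq_apply] at this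
      nlinarith
    simp
    have : δ * (δ * L^2) < δ * (c - β0) := by gcongr
    have : δ * δ * (mu.re ^ 2 + mu.im ^ 2) ≤ δ * δ * L^2 := by gcongr
    have : δ * mu.re ≤ δ * β0 := by gcongr
    have : 2 * (δ * β) = δ * β0 + δ * c := by rw [hβ]; ring
    nlinarith [sq_nonneg (δ * β)]
  have hR : (0:ℝ) ≤ 1 + δ * β := by positivity
  obtain ⟨R, hRe⟩ : ∃ R : NNReal, (R : ℝ) = 1 + δ * β := ⟨⟨1 + δ * β, hR⟩, rfl⟩
  rw [← hRe] at hTs ⊢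
  have hrad : spectralRadius ℂ T < (R : ENNReal) := by
    refine spectrum.spectralRadius_lt_of_forall_lt T ?_
    intro k hk
    exact_mod_cast hTs k hk
  have hg := spectrum.pow_nnnorm_pow_one_div_tendsto_nhds_spectralRadius T
  obtain ⟨N, hN, hN1⟩ := ((hg.eventually (gt_mem_nhds hrad)).and (eventually_ge_atTop 1)).exists
  refine ⟨N, hN1, ?_⟩
  have hN0 : (0:ℝ) < N := by exact_mod_cast hN1
  have h4 := ENNReal.rpow_le_rpow hN.le hN0.le
  rw [← ENNReal.rpow_mul, one_div, inv_mul_cancel₀ hN0.ne', ENNReal.rpow_one,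
    ENNReal.rpow_natCast] at h4
  exact_mod_cast h4

open scoped Matrix.Norms.L2Operator in
lemma urn_real_bound {q : ℕ} (M : Matrix (Fin q) (Fin q) ℝ) (x : EuclideanSpace ℝ (Fin q)) :
    ‖toEuclideanCLM (𝕜 := ℝ) M x‖ ≤ ‖M.map (fun x : ℝ => (x : ℂ))‖ * ‖x‖ := by
  have h := Matrix.l2_opNorm_mulVec (M.map (fun x : ℝ => (x : ℂ)))
    (WithLp.toLp 2 (fun i => (x i : ℂ)))
  have h1 : ‖(WithLp.toLp 2 (fun i => (x i : ℂ)) : EuclideanSpace ℂ (Fin q))‖ = ‖x‖ := by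
    simp [EuclideanSpace.norm_eq]
  have h2 : ‖(WithLp.toLp 2 ((M.map (fun x : ℝ => (x : ℂ))) *ᵥ (fun i => (x i : ℂ))) :
      EuclideanSpace ℂ (Fin q))‖ = ‖toEuclideanCLM (𝕜 := ℝ) M x‖ := by
    have : ((M.map (fun x : ℝ => (x : ℂ))) *ᵥ (fun i => (x i : ℂ))) =
        fun i => ((toEuclideanCLM (𝕜 := ℝ) M x i : ℝ) : ℂ) := by
      ext i
      simp [Matrix.mulVec, dotProduct, Matrix.ofLp_toEuclideanCLM]
    rw [this]
    simp [EuclideanSpace.norm_eq]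
  rw [h1] at h
  rw [← h2]
  exact h

lemma urn_sumsq {E : Type} [NormedAddCommGroup E] [InnerProductSpace ℝ E] [FiniteDimensional ℝ E]
    (N : ℕ) (L : ℕ → E →L[ℝ] E) :
    ∃ (F : Type) (_ : NormedAddCommGroup F) (_ : InnerProductSpace ℝ F) (_ : CompleteSpace F)
      (J : E →L[ℝ] F), ∀ x, ‖J x‖ ^ 2 = ∑ k ∈ Finset.range N, ‖L k x‖ ^ 2 := by
  have : CompleteSpace E := FiniteDimensional.complete ℝ E
  refine ⟨PiLp 2 (fun _ : Fin N => E), inferInstance, inferInstance, inferInstance,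
    (PiLp.continuousLinearEquiv 2 ℝ (fun _ : Fin N => E)).symm.toContinuousLinearMap.comp
      (ContinuousLinearMap.pi fun k : Fin N => L k), fun x => ?_⟩
  rw [PiLp.norm_sq_eq_of_L2, Finset.sum_range]
  rfl

set_option maxHeartbeats 1000000 in
lemma urn_lyap {q : ℕ} (hq : 0 < q) (B : Matrix (Fin q) (Fin q) ℝ) (c : ℝ) (hc : 0 < c)
    (hB : ∀ mu ∈ spectrum ℂ (B.map (fun x : ℝ => (x : ℂ))), mu.re < c) :
    ∃ δ β : ℝ, 0 < δ ∧ 0 ≤ β ∧ β < c ∧ 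
      ∃ (F : Type) (_ : NormedAddCommGroup F) (_ : InnerProductSpace ℝ F) (_ : CompleteSpace F)
      (J : EuclideanSpace ℝ (Fin q) →L[ℝ] F), (∀ x, ‖x‖ ≤ ‖J x‖) ∧ ∀ s : ℝ, 0 ≤ s → s ≤ δ → ∀ x,
        ‖J (x + s • toEuclideanCLM (𝕜 := ℝ) B x)‖ ≤ (1 + s * β) * ‖J x‖ := by
  obtain ⟨δ, β, hδ, hβ0, hβ, N, hN, hnorm⟩ := urn_gelfand hq _ c hc hB
  refine ⟨δ, β, hδ, hβ0, hβ, ?_⟩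
  set R := 1 + δ * β with hR
  have hRpos : 0 < R := by positivity
  set T : Matrix (Fin q) (Fin q) ℝ := 1 + δ • B with hT
  have hTN : ∀ x, ‖toEuclideanCLM (𝕜 := ℝ) (T ^ N) x‖ ≤ R ^ N * ‖x‖ := by
    intro x
    refine (urn_real_bound (T ^ N) x).trans ?_
    gcongr
    refine le_of_eq_of_le ?_ hnorm
    congr 1
    have h1 := map_pow (Complex.ofRealHom.mapMatrix (m := Fin q)) T N
    have h2 : (Complex.ofRealHom.mapMatrix (m := Fin q)) T =
        1 + (δ : ℂ) • B.map (fun x : ℝ => (x : ℂ)) := by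
      rw [hT, map_add, map_one]
      congr 1
      ext i j; simp
    rw [h2] at h1
    exact h1
  obtain ⟨F, i1, i2, i3, J, hJ0⟩ := urn_sumsq N
    (fun k => (R⁻¹ ^ k) • toEuclideanCLM (n := Fin q) (𝕜 := ℝ) (T ^ k))
  refine ⟨F, i1, i2, i3, J, ?_⟩
  have hJ : ∀ x, ‖J x‖ ^ 2 = ∑ k ∈ Finset.range N,
      (R⁻¹ ^ k * ‖toEuclideanCLM (𝕜 := ℝ) (T ^ k) x‖) ^ 2 := by
    intro x
    rw [hJ0]
    refine Finset.sum_congr rfl fun k _ => ?_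
    rw [_root_.smul_apply, norm_smul, Real.norm_of_nonneg (by positivity)]
  have hJT : ∀ x, ‖J (toEuclideanCLM (𝕜 := ℝ) T x)‖ ≤ R * ‖J x‖ := by
    intro x
    refine le_of_sq_le_sq ?_ (by positivity)
    rw [mul_pow, hJ, hJ, Finset.mul_sum]
    have e : ∀ k ∈ Finset.range N,
        (R⁻¹ ^ k * ‖toEuclideanCLM (𝕜 := ℝ) (T ^ k) (toEuclideanCLM (𝕜 := ℝ) T x)‖) ^ 2 =
        R ^ 2 * (R⁻¹ ^ (k+1) * ‖toEuclideanCLM (𝕜 := ℝ) (T ^ (k+1)) x‖) ^ 2 := by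
      intro k _
      have : toEuclideanCLM (𝕜 := ℝ) (T ^ k) (toEuclideanCLM (𝕜 := ℝ) T x) =
          toEuclideanCLM (𝕜 := ℝ) (T ^ (k+1)) x := by
        rw [pow_succ, map_mul]; rfl
      have h0 : R * R⁻¹ ^ (k + 1) = R⁻¹ ^ k := by
        rw [pow_succ', ← mul_assoc, mul_inv_cancel₀ hRpos.ne', one_mul]
      rw [this, ← mul_pow, ← mul_assoc, h0]
    rw [Finset.sum_congr rfl e]
    have h1 := Finset.sum_range_succ
      (fun k => R ^ 2 * (R⁻¹ ^ k * ‖toEuclideanCLM (𝕜 := ℝ) (T ^ k) x‖) ^ 2) N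
    rw [Finset.sum_range_succ'] at h1
    have h2 : (R⁻¹ ^ N * ‖toEuclideanCLM (𝕜 := ℝ) (T ^ N) x‖) ^ 2 ≤ ‖x‖ ^ 2 := by
      gcongr
      calc R⁻¹ ^ N * ‖toEuclideanCLM (𝕜 := ℝ) (T ^ N) x‖ ≤ R⁻¹ ^ N * (R ^ N * ‖x‖) := by
            gcongr; exact hTN x
        _ = ‖x‖ := by rw [← mul_assoc, ← mul_pow, inv_mul_cancel₀ hRpos.ne', one_pow, one_mul]
    have h3 : R ^ 2 * (R⁻¹ ^ N * ‖toEuclideanCLM (𝕜 := ℝ) (T ^ N) x‖) ^ 2 ≤ R^2 * ‖x‖ ^ 2 := by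
      gcongr
    simp only [pow_zero, one_mul, map_one, one_apply_eq_self] at h1
    linarith
  refine ⟨?_, ?_⟩
  · intro x
    refine le_of_sq_le_sq ?_ (by positivity)
    rw [hJ]
    have := Finset.single_le_sum (f := fun k => (R⁻¹ ^ k * ‖toEuclideanCLM (𝕜 := ℝ) (T ^ k) x‖) ^ 2)
      (s := Finset.range N) (fun i _ => by positivity) (Finset.mem_range.2 hN)
    simpa using this
  · intro s hs hsδ x
    have e : x + s • toEuclideanCLM (𝕜 := ℝ) B x =
        (1 - s / δ) • x + (s / δ) • toEuclideanCLM (𝕜 := ℝ) T x := by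
      rw [hT, map_add, map_one, map_smul]
      simp only [_root_.add_apply, one_apply_eq_self,
        _root_.smul_apply, smul_add, smul_smul, sub_smul, one_smul]
      rw [div_mul_cancel₀ _ hδ.ne']
      abel
    have h1 : s / δ ≤ 1 := (div_le_one hδ).2 hsδ
    have h2 : 0 ≤ s / δ := by positivity
    rw [e, map_add, map_smul, map_smul]
    calc _ ≤ (1 - s/δ) * ‖J x‖ + (s/δ) * (R * ‖J x‖) := by
          refine (norm_add_le _ _).trans ?_
          rw [norm_smul, norm_smul, Real.norm_of_nonneg h2, Real.norm_of_nonneg (by linarith)]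
          gcongr
          exact hJT x
      _ = _ := by rw [hR]; field_simp; ring

lemma urn_poly (k : ℕ) : ∃ C : ℝ, 0 ≤ C ∧ ∀ s t i : ℝ, 0 ≤ s → 0 ≤ t → |i| ≤ s * t →
    (s ^ 2 + 2 * i + t ^ 2) ^ (k + 1) ≤ (s ^ 2) ^ (k + 1) + 2 * (k + 1) * (s ^ 2) ^ k * i +
      C * ((s ^ 2) ^ k * t ^ 2 + (t ^ 2) ^ (k + 1)) := by
  induction k with
  | zero =>
    refine ⟨1, zero_le_one, fun s t i hs ht hi => ?_⟩
    simp only [zero_add, pow_one, pow_zero, Nat.cast_zero]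
    nlinarith [sq_nonneg t]
  | succ k ih =>
    obtain ⟨C, hC, ih⟩ := ih
    refine ⟨1 + 8 * (k + 1) + 8 * C, by positivity, fun s t i hs ht hi => ?_⟩
    have h := ih s t i hs ht hi
    obtain ⟨hi1, hi2⟩ := abs_le.1 hi
    set S := s ^ 2 with hS
    set τ := t ^ 2 with hτ
    have hS0 : 0 ≤ S := by positivity
    have hτ0 : 0 ≤ τ := by positivity
    have hw0 : 0 ≤ S + 2 * i + τ := by nlinarith [sq_nonneg (s - t)]
    have hw1 : S + 2 * i + τ ≤ 2 * (S + τ) := by nlinarith [sq_nonneg (s - t)]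
    have hii : i ^ 2 ≤ S * τ := by
      rw [hS, hτ, ← mul_pow]; exact sq_le_sq' hi1 hi2
    have hit : i * τ ≤ S * τ + τ ^ 2 := by
      have : i ≤ S + τ := by nlinarith [sq_nonneg (s - t)]
      nlinarith
    have hSk : 0 ≤ S ^ k := by positivity
    have hτk : 0 ≤ τ ^ k := by positivity
    set Q := S ^ (k + 1) * τ + τ ^ (k + 2) with hQ
    have hQ0 : 0 ≤ Q := by positivity
    have q1 : S ^ k * τ ^ 2 ≤ Q := by
      rcases le_total S τ with hle | hle
      · have : S ^ k * τ ^ 2 ≤ τ ^ k * τ ^ 2 := by gcongr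
        rw [hQ, pow_add τ k 2]
        have : 0 ≤ S ^ (k + 1) * τ := by positivity
        linarith
      · have : S ^ k * τ * τ ≤ S ^ k * τ * S := by gcongr
        have : 0 ≤ τ ^ (k + 2) := by positivity
        rw [hQ, pow_succ S k]
        nlinarith
    have q2 : S * τ ^ (k + 1) ≤ Q := by
      rcases le_total S τ with hle | hle
      · have : S * τ ^ (k + 1) ≤ τ * τ ^ (k + 1) := by gcongr
        rw [hQ, pow_succ' τ (k + 1)]
        have : 0 ≤ S ^ (k + 1) * τ := by positivity
        linarith
      · have : S * (τ ^ k * τ) ≤ S * (S ^ k * τ) := by gcongr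
        have : 0 ≤ τ ^ (k + 2) := by positivity
        rw [hQ, pow_succ S k, pow_succ τ k]
        nlinarith
    have q3 : S ^ (k + 1) * τ ≤ Q := by
      have : 0 ≤ τ ^ (k + 2) := by positivity
      linarith
    have q4 : τ ^ (k + 2) ≤ Q := by
      have : 0 ≤ S ^ (k + 1) * τ := by positivity
      linarith
    have r2 : S ^ k * (2 * i ^ 2 + i * τ) ≤ 4 * Q := by
      have : S ^ k * (2 * i ^ 2 + i * τ) ≤ S ^ k * (3 * (S * τ) + τ ^ 2) := by
        refine mul_le_mul_of_nonneg_left ?_ hSk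
        linarith
      have e : S ^ k * (3 * (S * τ) + τ ^ 2) = 3 * (S ^ (k + 1) * τ) + S ^ k * τ ^ 2 := by ring
      linarith
    have r3 : (S + 2 * i + τ) * (S ^ k * τ + τ ^ (k + 1)) ≤ 8 * Q := by
      have : (S + 2 * i + τ) * (S ^ k * τ + τ ^ (k + 1)) ≤
          2 * (S + τ) * (S ^ k * τ + τ ^ (k + 1)) := by gcongr
      have e : 2 * (S + τ) * (S ^ k * τ + τ ^ (k + 1)) =
        2 * (S ^ (k + 1) * τ + S * τ ^ (k + 1) + S ^ k * τ ^ 2 + τ ^ (k + 2)) := by ring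
      linarith
    calc (S + 2 * i + τ) ^ (k + 1 + 1) = (S + 2 * i + τ) * (S + 2 * i + τ) ^ (k + 1) := by
          rw [pow_succ']
      _ ≤ (S + 2 * i + τ) * (S ^ (k + 1) + 2 * (k + 1) * S ^ k * i +
            C * (S ^ k * τ + τ ^ (k + 1))) := by gcongr
      _ = S ^ (k + 2) + 2 * (k + 2) * S ^ (k + 1) * i + S ^ (k + 1) * τ
            + 2 * (k + 1) * (S ^ k * (2 * i ^ 2 + i * τ))
            + C * ((S + 2 * i + τ) * (S ^ k * τ + τ ^ (k + 1))) := by ring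
      _ ≤ S ^ (k + 2) + 2 * (k + 2) * S ^ (k + 1) * i + Q
            + 2 * (k + 1) * (4 * Q) + C * (8 * Q) := by gcongr
      _ = _ := by push_cast; ring

lemma urn_young (k : ℕ) (ε : ℝ) (hε : 0 < ε) (S τ : ℝ) (hS : 0 ≤ S) (hτ : 0 ≤ τ) :
    S ^ k * τ ≤ ε * S ^ (k + 1) + (1 / ε) ^ k * τ ^ (k + 1) := by
  have h1 : 0 ≤ ε * S ^ (k + 1) := by positivity
  have h2 : 0 ≤ (1 / ε) ^ k * τ ^ (k + 1) := by positivity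
  rcases le_total τ (ε * S) with h | h
  · have : S ^ k * τ ≤ S ^ k * (ε * S) := by gcongr
    have e : S ^ k * (ε * S) = ε * S ^ (k + 1) := by ring
    linarith
  · have h3 : S ≤ 1 / ε * τ := by
      rw [one_div, inv_mul_eq_div, le_div_iff₀ hε]; linarith
    have : S ^ k * τ ≤ (1 / ε * τ) ^ k * τ := by gcongr
    have e : (1 / ε * τ) ^ k * τ = (1 / ε) ^ k * τ ^ (k + 1) := by rw [mul_pow]; ring
    linarith

lemma urn_norm_ineq (k : ℕ) (ε : ℝ) (hε : 0 < ε) : ∃ C : ℝ, 0 ≤ C ∧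
    ∀ (F : Type) (_ : NormedAddCommGroup F) (_ : InnerProductSpace ℝ F) (n : ℕ), 1 ≤ n →
    ∀ x y : F,
    ‖x + y‖ ^ (2 * (k + 1)) ≤ (1 + ε / n) * ‖x‖ ^ (2 * (k + 1)) +
      2 * (k + 1) * (‖x‖ ^ (2 * k) * inner ℝ x y) + C * (n : ℝ) ^ k * ‖y‖ ^ (2 * (k + 1)) := by
  obtain ⟨C, hC, h⟩ := urn_poly k
  refine ⟨C * ((((C + 1) / ε)) ^ k + 1), by positivity, ?_⟩
  intro F _ _ n hn x y
  have hn' : (1:ℝ) ≤ n := by exact_mod_cast hn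
  have hn0 : (0:ℝ) < n := by linarith
  have h1 := h ‖x‖ ‖y‖ (inner ℝ x y) (norm_nonneg _) (norm_nonneg _) (abs_real_inner_le_norm x y)
  rw [← norm_add_sq_real] at h1
  simp only [pow_mul]
  have h2 := urn_young k (ε / ((C + 1) * n)) (by positivity) (‖x‖ ^ 2) (‖y‖ ^ 2) (by positivity)
    (by positivity)
  refine h1.trans ?_
  have e1 : (1 / (ε / ((C + 1) * n))) ^ k = ((C + 1) / ε) ^ k * (n : ℝ) ^ k := by
    rw [← mul_pow]; congr 1; field_simp
  rw [e1] at h2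
  set S := ‖x‖ ^ 2
  set τ := ‖y‖ ^ 2
  have hS0 : 0 ≤ S ^ (k + 1) := by positivity
  have hτ0 : 0 ≤ τ ^ (k + 1) := by positivity
  have h3 : C * (ε / ((C + 1) * n)) ≤ ε / n := by
    rw [mul_div_assoc', div_le_div_iff₀ (by positivity) hn0]
    have : 0 < ε * n := by positivity
    nlinarith
  have h4 : (1:ℝ) ≤ (n : ℝ) ^ k := one_le_pow₀ hn'
  have h5 : C * (S ^ k * τ) ≤ C * (ε / ((C + 1) * n) * S ^ (k + 1) +
      ((C + 1) / ε) ^ k * (n : ℝ) ^ k * τ ^ (k + 1)) := by gcongr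
  have h6 : C * (ε / ((C + 1) * n)) * S ^ (k + 1) ≤ ε / n * S ^ (k + 1) := by gcongr
  have h7 : C * τ ^ (k + 1) * 1 ≤ C * τ ^ (k + 1) * (n : ℝ) ^ k := by gcongr
  linarith

lemma urn_rec (k : ℕ) (b β w : ℝ) (hb : 0 < b) (hβ0 : 0 ≤ β) (hβ : β < b / 2) (hw : 0 < w) :
    ∃ ε : ℝ, 0 < ε ∧ ∀ (C : ℝ) (u : ℕ → ℝ), (∀ n, 0 ≤ u n) →
      (∀ᶠ n : ℕ in atTop, u (n + 1) ≤ (1 + ε / n) * ((1 + (w + n * b)⁻¹ * β) ^ (2 * (k + 1)) * u n)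
        + C * (n : ℝ) ^ k) →
      ∃ K : ℝ, ∀ᶠ n : ℕ in atTop, u n ≤ K * (n : ℝ) ^ (k + 1) := by
  have hβb : 2 * β / b < 1 := by rw [div_lt_one hb]; linarith
  set ε : ℝ := (k + 1) * (1 - 2 * β / b) / 2 with hε
  have hε0 : 0 < ε := by
    have : 0 < 1 - 2 * β / b := by linarith
    positivity
  refine ⟨ε, hε0, fun C u hu hrec => ?_⟩
  set γ : ℝ := 2 * (k + 1) * β / b + ε with hγ
  have hγ0 : 0 < γ := by positivity
  have hγ1 : γ = (k + 1) - ε := by rw [hγ, hε]; ring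
  set γ' := γ + ε / 2 with hγ'
  have hfac : ∀ᶠ n : ℕ in atTop,
      (1 + ε / n) * (1 + (w + n * b)⁻¹ * β) ^ (2 * (k + 1)) ≤ 1 + γ' / n := by
    obtain ⟨n1, hn1⟩ := exists_nat_ge (max γ (γ ^ 2 / (ε / 2)))
    filter_upwards [eventually_ge_atTop n1, eventually_ge_atTop 1] with n hn hn'
    have hn0 : (0:ℝ) < n := by exact_mod_cast hn'
    have hnn : (n1 : ℝ) ≤ n := by exact_mod_cast hn
    have a1 : 1 + ε / n ≤ Real.exp (ε / n) := by
      have := Real.add_one_le_exp (ε / n); linarith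
    have a2 : (w + n * b)⁻¹ * β ≤ β / b / n := by
      have : (w + n * b)⁻¹ ≤ (n * b)⁻¹ := by gcongr; linarith
      calc (w + n * b)⁻¹ * β ≤ (n * b)⁻¹ * β := by gcongr
        _ = _ := by field_simp
    have a3 : 1 + (w + n * b)⁻¹ * β ≤ Real.exp (β / b / n) := by
      have := Real.add_one_le_exp (β / b / n); linarith
    have a4 : 0 ≤ 1 + (w + n * b)⁻¹ * β := by positivity
    calc _ ≤ Real.exp (ε / n) * Real.exp (β / b / n) ^ (2 * (k + 1)) := by gcongr
      _ = Real.exp (γ / n) := by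
        rw [← Real.exp_nat_mul, ← Real.exp_add]
        congr 1
        rw [hγ]; push_cast; ring
      _ ≤ 1 + γ / n + (γ / n) ^ 2 := by
        have hle : |γ / n| ≤ 1 := by
          rw [abs_of_pos (by positivity), div_le_one hn0]
          exact (le_max_left _ _).trans (hn1.trans hnn)
        have := (abs_le.1 (Real.abs_exp_sub_one_sub_id_le hle)).2
        linarith
      _ ≤ _ := by
        have : γ ^ 2 / (ε / 2) ≤ n := (le_max_right _ _).trans (hn1.trans hnn)
        rw [div_le_iff₀ (by positivity)] at this
        have h2 : (γ / n) ^ 2 ≤ (ε / 2) / n := by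
          rw [div_pow, div_le_div_iff₀ (by positivity) hn0]
          nlinarith
        rw [hγ', add_div γ]; linarith
  obtain ⟨n0, hn0⟩ := eventually_atTop.1 ((hrec.and hfac).and (eventually_ge_atTop 1))
  have hn01 : 1 ≤ n0 := (hn0 n0 le_rfl).2
  set K := max (u n0) (max C 0 / (ε / 2)) with hK
  have hK0 : 0 ≤ K := (hu n0).trans (le_max_left _ _)
  refine ⟨K, eventually_atTop.2 ⟨n0, fun n hn => ?_⟩⟩
  induction n, hn using Nat.le_induction with
  | base =>
    have h1 : (1:ℝ) ≤ (n0 : ℝ) ^ (k + 1) := one_le_pow₀ (by exact_mod_cast hn01)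
    calc u n0 ≤ K := le_max_left _ _
      _ = K * 1 := (mul_one K).symm
      _ ≤ _ := by gcongr
  | succ n hn ih =>
    obtain ⟨⟨h1, h2⟩, h3⟩ := hn0 n hn
    have hnp : (0:ℝ) < n := by exact_mod_cast h3
    have hCK : C ≤ K * (ε / 2) := by
      have : max C 0 / (ε / 2) ≤ K := le_max_right _ _
      rw [div_le_iff₀ (by positivity)] at this
      exact (le_max_left _ _).trans this
    have hγp : 0 ≤ γ' := by positivity
    have hbern : (n : ℝ) ^ (k + 1) + (k + 1) * (n : ℝ) ^ k ≤ ((n : ℝ) + 1) ^ (k + 1) := by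
      have := one_add_mul_le_pow (a := 1 / (n : ℝ)) (by have : 0 < 1 / (n:ℝ) := by positivity
                                                        linarith) (k + 1)
      calc (n : ℝ) ^ (k + 1) + (k + 1) * (n : ℝ) ^ k
          = (n : ℝ) ^ (k + 1) * (1 + ((k + 1 : ℕ) : ℝ) * (1 / n)) := by
            push_cast; field_simp; ring
        _ ≤ (n : ℝ) ^ (k + 1) * (1 + 1 / n) ^ (k + 1) := by gcongr
        _ = _ := by rw [← mul_pow]; congr 1; field_simp
    calc u (n + 1) ≤ _ := h1
      _ = (1 + ε / n) * (1 + (w + n * b)⁻¹ * β) ^ (2 * (k + 1)) * u n + C * (n : ℝ) ^ k := by ring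
      _ ≤ (1 + γ' / n) * (K * (n : ℝ) ^ (k + 1)) + K * (ε / 2) * (n : ℝ) ^ k := by
        have hp : 0 ≤ (n : ℝ) ^ k := by positivity
        have hu' := hu n
        gcongr
      _ = K * ((n : ℝ) ^ (k + 1) + (k + 1) * (n : ℝ) ^ k) := by
        rw [hγ', hγ1]; field_simp; ring
      _ ≤ K * ((n : ℝ) + 1) ^ (k + 1) := by gcongr
      _ = _ := by push_cast; rfl

lemma urn_integral_pow_le {Ω : Type} {m0 : MeasurableSpace Ω} {μ : Measure Ω} {E : Type}
    [NormedAddCommGroup E] (f : Ω → E) (p : ℕ) (hp : p ≠ 0) (M : ENNReal) (hM : M ≠ ⊤)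
    (hf : MemLp f p μ) (h : eLpNorm f p μ ≤ M) : ∫ ω, ‖f ω‖ ^ p ∂μ ≤ M.toReal ^ p := by
  rw [hf.eLpNorm_eq_integral_rpow_norm (by exact_mod_cast hp) (by simp)] at h
  simp only [ENNReal.toReal_natCast, Real.rpow_natCast] at h
  have h0 : 0 ≤ ∫ ω, ‖f ω‖ ^ p ∂μ := integral_nonneg fun ω => by positivity
  have h1 := ENNReal.toReal_mono hM h
  rw [ENNReal.toReal_ofReal (by positivity)] at h1
  have h2 := pow_le_pow_left₀ (by positivity) h1 p
  rwa [Real.rpow_inv_natCast_pow h0 hp] at h2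

lemma urn_orth {Ω : Type} {m m0 : MeasurableSpace Ω} (hm : m ≤ m0) {μ : Measure Ω}
    [IsProbabilityMeasure μ] {F : Type} [NormedAddCommGroup F] [InnerProductSpace ℝ F]
    [CompleteSpace F] (k : ℕ) (P D : Ω → F) (hP : StronglyMeasurable[m] P)
    (hPm : MemLp P (2 * (k + 1) : ℕ) μ) (hDm : MemLp D (2 * (k + 1) : ℕ) μ)
    (hD : μ[D | m] =ᵐ[μ] 0) :
    Integrable (fun ω => ‖P ω‖ ^ (2 * k) * inner ℝ (P ω) (D ω)) μ ∧
    ∫ ω, ‖P ω‖ ^ (2 * k) * inner ℝ (P ω) (D ω) ∂μ = 0 := by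
  have hi : Integrable (fun ω => ‖P ω‖ ^ (2 * k) * inner ℝ (P ω) (D ω)) μ := by
    have h1 := (hPm.integrable_norm_pow').add hDm.integrable_norm_pow'
    refine h1.mono' ?_ (Eventually.of_forall fun ω => ?_)
    · exact ((hPm.1.norm.pow _).mul (hPm.1.inner hDm.1))
    · have h2 := abs_real_inner_le_norm (P ω) (D ω)
      simp only [norm_mul, norm_pow, norm_norm, Pi.add_apply]
      rw [Real.norm_eq_abs (inner ℝ _ _)]
      set s := ‖P ω‖
      set t := ‖D ω‖
      have hs : 0 ≤ s := norm_nonneg _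
      have ht : 0 ≤ t := norm_nonneg _
      have h3 : s ^ (2 * k) * |inner ℝ (P ω) (D ω)| ≤ s ^ (2 * k) * (s * t) := by gcongr
      refine h3.trans ?_
      rcases le_total s t with h | h
      · calc s ^ (2 * k) * (s * t) ≤ t ^ (2 * k) * (t * t) := by gcongr
          _ = 0 + t ^ (2 * (k + 1)) := by ring
          _ ≤ _ := by gcongr; positivity
      · calc s ^ (2 * k) * (s * t) ≤ s ^ (2 * k) * (s * s) := by gcongr
          _ = s ^ (2 * (k + 1)) + 0 := by ring
          _ ≤ _ := by gcongr; positivity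
  refine ⟨hi, ?_⟩
  have e : (fun ω => ‖P ω‖ ^ (2 * k) * inner ℝ (P ω) (D ω)) =
      fun ω => innerSL ℝ (‖P ω‖ ^ (2 * k) • P ω) (D ω) := by
    ext ω; rw [innerSL_apply_apply, real_inner_smul_left]
  have hPs : StronglyMeasurable[m] fun ω => ‖P ω‖ ^ (2 * k) • P ω := (hP.norm.pow _).smul hP
  have hDi : Integrable D μ := hDm.integrable (by
    exact_mod_cast (by omega : 1 ≤ 2 * (k + 1)))
  rw [e] at hi ⊢
  have h := condExp_bilin_of_stronglyMeasurable_left (innerSL ℝ) hPs hi hDi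
  rw [← integral_condExp hm, integral_congr_ae h]
  rw [← integral_zero Ω ℝ (μ := μ)]
  refine integral_congr_ae ?_
  filter_upwards [hD] with ω hω
  rw [hω]; simp

lemma urn_moment {Ω : Type} {m0 : MeasurableSpace Ω}
    (μ : Measure Ω) [IsProbabilityMeasure μ] (ℱ : Filtration ℕ m0)
    {E : Type} [NormedAddCommGroup E] [NormedSpace ℝ E] [CompleteSpace E]
    {F : Type} [NormedAddCommGroup F] [InnerProductSpace ℝ F] [CompleteSpace F]
    (L : E →L[ℝ] E) (J : E →L[ℝ] F) (H : E → Prop) (w b δ β : ℝ) (hw : 0 < w) (hb : 0 < b)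
    (hδ : 0 < δ) (hβ0 : 0 ≤ β) (hβ : β < b / 2) (hJ1 : ∀ x, ‖x‖ ≤ ‖J x‖)
    (hJ2 : ∀ s : ℝ, 0 ≤ s → s ≤ δ → ∀ x, H x → ‖J (x + s • L x)‖ ≤ (1 + s * β) * ‖J x‖)
    (X : ℕ → Ω → E) (hX : ∀ n, StronglyMeasurable[ℱ n] (X n))
    (x₀ : E) (hX0 : X 0 = fun _ => x₀)
    (hH : ∀ n : ℕ, ∀ᵐ ω ∂μ, H (X n ω - ∫ ω', X n ω' ∂μ))
    (hcond : ∀ n : ℕ, μ[fun ω => X (n + 1) ω - X n ω | ℱ n] =ᵐ[μ]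
      fun ω => (w + (n : ℝ) * b)⁻¹ • L (X n ω))
    (k : ℕ) (hmom : (⨆ n : ℕ, eLpNorm (fun ω => X (n + 1) ω - X n ω) (2 * (k + 1) : ℕ) μ) < ⊤) :
    (∀ n, MemLp (X n) (2 * (k + 1) : ℕ) μ) ∧
    ∃ K : ℝ, ∀ᶠ n : ℕ in atTop,
      ∫ ω, ‖X n ω - ∫ ω', X n ω' ∂μ‖ ^ (2 * (k + 1)) ∂μ ≤ K * (n : ℝ) ^ (k + 1) := by
  set p : ℕ := 2 * (k + 1) with hp
  have hp0 : p ≠ 0 := by omega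
  have hp1 : (1 : ENNReal) ≤ p := by exact_mod_cast (by omega : 1 ≤ p)
  set M := ⨆ n : ℕ, eLpNorm (fun ω => X (n + 1) ω - X n ω) p μ with hM
  have hMn : ∀ n, eLpNorm (fun ω => X (n + 1) ω - X n ω) p μ ≤ M := fun n =>
    le_iSup (fun n : ℕ => eLpNorm (fun ω => X (n + 1) ω - X n ω) p μ) n
  have hXs : ∀ n, StronglyMeasurable (X n) := fun n => (hX n).mono (ℱ.le n)
  have hΔ : ∀ n, MemLp (fun ω => X (n + 1) ω - X n ω) p μ := fun n =>
    ⟨((hXs (n + 1)).sub (hXs n)).aestronglyMeasurable, (hMn n).trans_lt hmom⟩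
  have hXm : ∀ n, MemLp (X n) p μ := by
    intro n
    induction n with
    | zero => rw [hX0]; exact memLp_const _
    | succ n ih =>
      have := ih.add (hΔ n)
      refine this.ae_eq (Eventually.of_forall fun ω => ?_)
      simp
  have hXi : ∀ n, Integrable (X n) μ := fun n => (hXm n).integrable hp1
  refine ⟨hXm, ?_⟩
  set Y : ℕ → Ω → E := fun n ω => X n ω - ∫ ω', X n ω' ∂μ with hY
  have hYm : ∀ n, MemLp (Y n) p μ := fun n => (hXm n).sub (memLp_const _)
  have hYs : ∀ n, StronglyMeasurable[ℱ n] (Y n) := fun n => (hX n).sub stronglyMeasurable_const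
  set D : ℕ → Ω → E := fun n ω => (X (n + 1) ω - X n ω) -
    (μ[fun ω => X (n + 1) ω - X n ω | ℱ n]) ω with hD
  have hDm : ∀ n, MemLp (D n) p μ := fun n => (hΔ n).sub ((hΔ n).condExp hp1)
  have hDn : ∀ n, eLpNorm (D n) p μ ≤ M + M := fun n =>
    (eLpNorm_sub_le (hΔ n).1 ((hΔ n).condExp hp1).1 hp1).trans
      (add_le_add (hMn n) ((eLpNorm_condExp_le_eLpNorm _ hp1).trans (hMn n)))
  have hDc : ∀ n, μ[D n | ℱ n] =ᵐ[μ] 0 := by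
    intro n
    have h1 := condExp_sub (m := ℱ n) ((hΔ n).integrable hp1) (integrable_condExp (m := ℱ n)
      (f := fun ω => X (n + 1) ω - X n ω) (μ := μ))
    have h2 := condExp_condExp_of_le (le_refl (ℱ n)) (ℱ.le n) (f := fun ω => X (n + 1) ω - X n ω)
      (μ := μ)
    refine h1.trans ?_
    filter_upwards [h2] with ω h2
    simp [h2]
  have hJDm : ∀ n, MemLp (fun ω => J (D n ω)) p μ := fun n => J.comp_memLp' (hDm n)
  have hJDc : ∀ n, μ[fun ω => J (D n ω) | ℱ n] =ᵐ[μ] 0 := by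
    intro n
    have h1 := J.comp_condExp_comm (m := ℱ n) ((hDm n).integrable hp1)
    refine h1.symm.trans ?_
    filter_upwards [hDc n] with ω h
    simp [h]
  have hJYm : ∀ n, MemLp (fun ω => J (Y n ω)) p μ := fun n => J.comp_memLp' (hYm n)
  -- the mean
  have hmean : ∀ n : ℕ, ∫ ω, X (n + 1) ω ∂μ =
      ∫ ω, X n ω ∂μ + (w + (n : ℝ) * b)⁻¹ • L (∫ ω, X n ω ∂μ) := by
    intro n
    have h1 := integral_congr_ae (hcond n)
    rw [integral_condExp (ℱ.le n), integral_sub (hXi _) (hXi _), integral_smul,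
      L.integral_comp_comm (hXi n)] at h1
    rw [← h1]; abel
  set P : ℕ → Ω → F := fun n ω => J (Y n ω + (w + (n : ℝ) * b)⁻¹ • L (Y n ω)) with hPdef
  have hdec : ∀ n, ∀ᵐ ω ∂μ, J (Y (n + 1) ω) = P n ω + J (D n ω) := by
    intro n
    filter_upwards [hcond n] with ω h
    simp only [hPdef, hD, hY]
    rw [h, hmean n, ← map_add]
    congr 1
    simp only [map_sub, smul_sub]
    abel
  have hPs : ∀ n, StronglyMeasurable[ℱ n] (P n) := fun n =>
    J.continuous.comp_stronglyMeasurable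
      ((hYs n).add ((L.continuous.comp_stronglyMeasurable (hYs n)).const_smul _))
  have hPm : ∀ n, MemLp (P n) p μ := fun n =>
    J.comp_memLp' ((hYm n).add ((L.comp_memLp' (hYm n)).const_smul _))
  obtain ⟨ε, hε, hrec⟩ := urn_rec k b β w hb hβ0 hβ hw
  obtain ⟨C, hC, hineq⟩ := urn_norm_ineq k ε hε
  set C1 := (‖J‖ * (M + M).toReal) ^ p with hC1
  have hDb : ∀ n, ∫ ω, ‖J (D n ω)‖ ^ p ∂μ ≤ C1 := by
    intro n
    have h1 := urn_integral_pow_le (D n) p hp0 (M + M) (by simp [hmom.ne]) (hDm n) (hDn n)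
    calc ∫ ω, ‖J (D n ω)‖ ^ p ∂μ ≤ ∫ ω, ‖J‖ ^ p * ‖D n ω‖ ^ p ∂μ := by
          refine integral_mono (hJDm n).integrable_norm_pow'
            ((hDm n).integrable_norm_pow'.const_mul _) fun ω => ?_
          show ‖J (D n ω)‖ ^ p ≤ ‖J‖ ^ p * ‖D n ω‖ ^ p
          rw [← mul_pow]
          gcongr
          exact J.le_opNorm _
      _ = ‖J‖ ^ p * ∫ ω, ‖D n ω‖ ^ p ∂μ := integral_const_mul _ _
      _ ≤ ‖J‖ ^ p * (M + M).toReal ^ p := by gcongr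
      _ = C1 := by rw [hC1, mul_pow]
  obtain ⟨K, hK⟩ := hrec (C * C1) (fun n => ∫ ω, ‖J (Y n ω)‖ ^ p ∂μ)
    (fun n => integral_nonneg fun ω => by positivity) (by
      have hlarge : ∀ᶠ n : ℕ in atTop, (w + (n : ℝ) * b)⁻¹ ≤ δ := by
        obtain ⟨n1, hn1⟩ := exists_nat_ge (δ⁻¹ / b)
        filter_upwards [eventually_ge_atTop n1] with n hn
        have hnn : (n1 : ℝ) ≤ n := by exact_mod_cast hn
        have h2 := hn1.trans hnn
        rw [div_le_iff₀ hb] at h2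
        rw [inv_le_comm₀ (by positivity) hδ]
        linarith
      filter_upwards [hlarge, eventually_ge_atTop 1] with n hn hn1
      have hs0 : 0 ≤ (w + (n : ℝ) * b)⁻¹ := by positivity
      obtain ⟨ho1, ho2⟩ := urn_orth (ℱ.le n) k (P n) (fun ω => J (D n ω)) (hPs n) (hPm n)
        (hJDm n) (hJDc n)
      have i1 : Integrable (fun ω => (1 + ε / n) * ‖P n ω‖ ^ p) μ :=
        (hPm n).integrable_norm_pow'.const_mul _
      have i2 : Integrable (fun ω => 2 * ((k : ℝ) + 1) *
          (‖P n ω‖ ^ (2 * k) * inner ℝ (P n ω) (J (D n ω)))) μ := ho1.const_mul _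
      have i3 : Integrable (fun ω => C * (n : ℝ) ^ k * ‖J (D n ω)‖ ^ p) μ :=
        (hJDm n).integrable_norm_pow'.const_mul _
      have i12 : Integrable (fun ω => (1 + ε / n) * ‖P n ω‖ ^ p + 2 * ((k : ℝ) + 1) *
          (‖P n ω‖ ^ (2 * k) * inner ℝ (P n ω) (J (D n ω)))) μ := i1.add i2
      have hPb : ∫ ω, ‖P n ω‖ ^ p ∂μ ≤
          (1 + (w + n * b)⁻¹ * β) ^ p * ∫ ω, ‖J (Y n ω)‖ ^ p ∂μ := by
        rw [← integral_const_mul]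
        refine integral_mono_ae (hPm n).integrable_norm_pow'
          ((hJYm n).integrable_norm_pow'.const_mul _) ?_
        filter_upwards [hH n] with ω hω
        show ‖P n ω‖ ^ p ≤ (1 + (w + n * b)⁻¹ * β) ^ p * ‖J (Y n ω)‖ ^ p
        rw [← mul_pow]
        gcongr
        exact hJ2 _ hs0 hn _ hω
      calc ∫ ω, ‖J (Y (n + 1) ω)‖ ^ p ∂μ
          ≤ ∫ ω, ((1 + ε / n) * ‖P n ω‖ ^ p + 2 * ((k : ℝ) + 1) *
            (‖P n ω‖ ^ (2 * k) * inner ℝ (P n ω) (J (D n ω))) +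
            C * (n : ℝ) ^ k * ‖J (D n ω)‖ ^ p) ∂μ := by
            refine integral_mono_ae (hJYm (n + 1)).integrable_norm_pow' (i12.add i3) ?_
            filter_upwards [hdec n] with ω hω
            rw [hω]
            exact hineq F _ _ n hn1 (P n ω) (J (D n ω))
        _ = (1 + ε / n) * ∫ ω, ‖P n ω‖ ^ p ∂μ +
            C * (n : ℝ) ^ k * ∫ ω, ‖J (D n ω)‖ ^ p ∂μ := by
            rw [integral_add i12 i3, integral_add i1 i2, integral_const_mul,
              integral_const_mul, integral_const_mul, ho2]
            ring
        _ ≤ (1 + ε / n) * ((1 + (w + n * b)⁻¹ * β) ^ p * ∫ ω, ‖J (Y n ω)‖ ^ p ∂μ) +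
            C * (n : ℝ) ^ k * C1 := by
            have := hDb n
            gcongr
        _ = _ := by ring)
  refine ⟨K, ?_⟩
  filter_upwards [hK] with n hn
  refine le_trans ?_ hn
  refine integral_mono (hYm n).integrable_norm_pow' (hJYm n).integrable_norm_pow' fun ω => ?_
  show ‖Y n ω‖ ^ p ≤ ‖J (Y n ω)‖ ^ p
  gcongr
  exact hJ1 _

lemma urn_clamp (M y : ℝ) (hM : 0 < M) : |y - max (-M) (min M y)| ≤ y ^ 2 / M := by
  rw [le_div_iff₀ hM]
  rcases le_total y (-M) with h | h
  · rw [min_eq_right (by linarith), max_eq_left h, abs_of_nonpos (by linarith)]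
    nlinarith
  · rcases le_total M y with h' | h'
    · rw [min_eq_left h', max_eq_right (by linarith), abs_of_nonneg (by linarith)]
      nlinarith
    · rw [min_eq_right h', max_eq_right h, sub_self, abs_zero, zero_mul]
      positivity

lemma urn_weak {Ω : Type} {m0 : MeasurableSpace Ω} (μ : Measure Ω) [IsProbabilityMeasure μ]
    {E : Type} [NormedAddCommGroup E] [MeasurableSpace E] [BorelSpace E]
    (ν : Measure E) [IsProbabilityMeasure ν] (Z : ℕ → Ω → E) (hZ : ∀ n, AEMeasurable (Z n) μ)
    (hconv : ∀ f : BoundedContinuousFunction E ℝ,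
      Tendsto (fun n : ℕ => ∫ ω, f (Z n ω) ∂μ) atTop (nhds (∫ x, f x ∂ν)))
    (f : E → ℝ) (hf : Continuous f) (K : ℝ)
    (hint : ∀ n, Integrable (fun ω => f (Z n ω) ^ 2) μ)
    (hK : ∀ᶠ n in atTop, ∫ ω, f (Z n ω) ^ 2 ∂μ ≤ K) :
    Integrable f ν ∧ Tendsto (fun n : ℕ => ∫ ω, f (Z n ω) ∂μ) atTop (nhds (∫ x, f x ∂ν)) := by
  -- clamp
  let g : ℝ → BoundedContinuousFunction E ℝ := fun M =>
    BoundedContinuousFunction.ofNormedAddCommGroup (fun x => max (-|M|) (min |M| (f x)))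
      (by fun_prop) |M| (fun x => by
        rw [Real.norm_eq_abs, abs_le]
        exact ⟨le_max_left _ _, max_le (by linarith [abs_nonneg M]) (min_le_left _ _)⟩)
  have hg : ∀ M : ℝ, 0 < M → ∀ x, g M x = max (-M) (min M (f x)) := by
    intro M hM x
    show max (-|M|) (min |M| (f x)) = _
    rw [abs_of_pos hM]
  let h : ℝ → BoundedContinuousFunction E ℝ := fun M =>
    BoundedContinuousFunction.ofNormedAddCommGroup (fun x => min |M| (f x ^ 2))
      (by fun_prop) |M| (fun x => by
        rw [Real.norm_eq_abs, abs_of_nonneg (by positivity)]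
        exact min_le_left _ _)
  have hh : ∀ M : ℝ, 0 ≤ M → ∀ x, h M x = min M (f x ^ 2) := by
    intro M hM x
    show min |M| (f x ^ 2) = _
    rw [abs_of_nonneg hM]
  have hK0 : 0 ≤ K := by
    obtain ⟨n, hn⟩ := hK.exists
    exact le_trans (integral_nonneg fun ω => by positivity) hn
  have hbd : ∀ φ : BoundedContinuousFunction E ℝ, ∀ n, Integrable (fun ω => φ (Z n ω)) μ := by
    intro φ n
    refine Integrable.of_bound (C := ‖φ‖)
      (φ.continuous.measurable.comp_aemeasurable (hZ n)).aestronglyMeasurable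
      (Eventually.of_forall fun ω => φ.norm_coe_le_norm _)
  have hbdν : ∀ φ : BoundedContinuousFunction E ℝ, Integrable (fun x => φ x) ν := by
    intro φ
    refine Integrable.of_bound (C := ‖φ‖) (φ.continuous.measurable).aestronglyMeasurable
      (Eventually.of_forall fun ω => φ.norm_coe_le_norm _)
  have hhK : ∀ M : ℕ, ∫ x, h M x ∂ν ≤ K := by
    intro M
    refine le_of_tendsto (hconv (h M)) ?_
    filter_upwards [hK] with n hn
    refine le_trans (integral_mono (hbd _ n) (hint n) fun ω => ?_) hn
    show h M (Z n ω) ≤ _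
    rw [hh _ (by positivity)]
    exact min_le_right _ _
  have hlint : ∫⁻ x, ENNReal.ofReal (f x ^ 2) ∂ν ≤ ENNReal.ofReal K := by
    have hsup : ∀ x, ENNReal.ofReal (f x ^ 2) = ⨆ M : ℕ, ENNReal.ofReal (h M x) := by
      intro x
      refine le_antisymm ?_ (iSup_le fun M => ?_)
      · obtain ⟨M, hM⟩ := exists_nat_ge (f x ^ 2)
        refine le_trans ?_ (le_iSup (fun M : ℕ => ENNReal.ofReal (h M x)) M)
        rw [hh _ (by positivity), min_eq_right hM]
      · rw [hh _ (by positivity)]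
        exact ENNReal.ofReal_le_ofReal (min_le_right _ _)
    simp_rw [hsup]
    rw [lintegral_iSup]
    · refine iSup_le fun M => ?_
      rw [← ofReal_integral_eq_lintegral_ofReal (hbdν _)]
      · exact ENNReal.ofReal_le_ofReal (hhK M)
      · refine Eventually.of_forall fun x => ?_
        show 0 ≤ h M x
        rw [hh _ (by positivity)]
        positivity
    · intro M
      exact (h M).continuous.measurable.ennreal_ofReal
    · intro M M' hMM x
      show ENNReal.ofReal (h M x) ≤ ENNReal.ofReal (h M' x)
      rw [hh _ (by positivity), hh _ (by positivity)]
      gcongr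
  have hf2 : Integrable (fun x => f x ^ 2) ν := by
    refine ⟨(hf.pow 2).measurable.aestronglyMeasurable, ?_⟩
    rw [hasFiniteIntegral_iff_ofReal (Eventually.of_forall fun x => by positivity)]
    exact hlint.trans_lt ENNReal.ofReal_lt_top
  have hf2K : ∫ x, f x ^ 2 ∂ν ≤ K := by
    rw [integral_eq_lintegral_of_nonneg_ae (Eventually.of_forall fun x => by positivity)
      hf2.aestronglyMeasurable]
    exact ENNReal.toReal_le_of_le_ofReal hK0 hlint
  have hle : ∀ y : ℝ, ‖y‖ ≤ 1 + y ^ 2 := by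
    intro y
    rw [Real.norm_eq_abs, abs_le]
    constructor <;> nlinarith [sq_nonneg (y - 1), sq_nonneg (y + 1)]
  have hfi : Integrable f ν :=
    ((integrable_const (1:ℝ)).add hf2).mono' hf.measurable.aestronglyMeasurable
      (Eventually.of_forall fun x => hle _)
  have hfZ : ∀ n, Integrable (fun ω => f (Z n ω)) μ := fun n =>
    ((integrable_const (1:ℝ)).add (hint n)).mono'
      (hf.measurable.comp_aemeasurable (hZ n)).aestronglyMeasurable
      (Eventually.of_forall fun x => hle _)
  refine ⟨hfi, ?_⟩
  rw [Metric.tendsto_atTop]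
  intro ε hε
  set M := 3 * (K + 1) / ε with hM
  have hM0 : 0 < M := by positivity
  have hKM : K / M < ε / 3 := by
    rw [div_lt_iff₀ hM0, hM]
    field_simp
    linarith
  obtain ⟨N, hN⟩ := eventually_atTop.1
    (((Metric.tendsto_nhds.1 (hconv (g M))) (ε / 3) (by positivity)).and hK)
  refine ⟨N, fun n hn => ?_⟩
  obtain ⟨h1, h2⟩ := hN n hn
  rw [Real.dist_eq] at h1 ⊢
  have h3 : |∫ ω, f (Z n ω) ∂μ - ∫ ω, g M (Z n ω) ∂μ| ≤ K / M := by
    rw [← integral_sub (hfZ n) (hbd _ n)]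
    refine (abs_integral_le_integral_abs).trans ?_
    calc _ ≤ ∫ ω, f (Z n ω) ^ 2 / M ∂μ := by
          refine integral_mono ((hfZ n).sub (hbd _ n)).abs ((hint n).div_const _) fun ω => ?_
          show |f (Z n ω) - g M (Z n ω)| ≤ _
          rw [hg M hM0]
          exact urn_clamp M _ hM0
      _ = (∫ ω, f (Z n ω) ^ 2 ∂μ) / M := integral_div _ _
      _ ≤ _ := by gcongr
  have h4 : |∫ x, f x ∂ν - ∫ x, g M x ∂ν| ≤ K / M := by
    rw [← integral_sub hfi (hbdν _)]
    refine (abs_integral_le_integral_abs).trans ?_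
    calc _ ≤ ∫ x, f x ^ 2 / M ∂ν := by
          refine integral_mono (hfi.sub (hbdν _)).abs (hf2.div_const _) fun x => ?_
          show |f x - g M x| ≤ _
          rw [hg M hM0]
          exact urn_clamp M _ hM0
      _ = (∫ x, f x ^ 2 ∂ν) / M := integral_div _ _
      _ ≤ _ := by gcongr
  rw [abs_le] at h3 h4
  rw [abs_lt] at h1 ⊢
  constructor <;> linarith [h1.1, h1.2, h3.1, h3.2, h4.1, h4.2]

/-- Under the Pólya urn hypotheses, assume all moment conditions
(sup_n ‖X_{n+1} − X_n‖_p < ∞ for every p ≥ 2), that Re λ₂ < b/2 (i.e. every candidate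
for the second eigenvalue λ₂ has real part < b/2, λ₁ = b being the largest eigenvalue),
and that (X_n − E X_n)/√n converges in distribution to the centered Gaussian law N(0, Σ)
on ℝ^q (characterized by: every linear image l·Z has the one-dimensional law N(0, l'Σl)).
Then the convergence holds with convergence of all moments: for every real r ≥ 1 the r-th
absolute moments converge, for every multi-index α the mixed moments converge, and in
particular Cov(X_n)/n → Σ entrywise. -/
theorem urn_small_clt_moment_convergence
    (q : ℕ) (hq : 2 ≤ q) {Ω : Type} {m0 : MeasurableSpace Ω}
    (μ : Measure Ω) [IsProbabilityMeasure μ] (ℱ : Filtration ℕ m0)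
    (a : Fin q → ℝ) (b : ℝ) (hb : 0 < b)
    (A : Matrix (Fin q) (Fin q) ℝ) (hA : Matrix.vecMul a A = b • a)
    (X : ℕ → Ω → EuclideanSpace ℝ (Fin q)) (hadp : Adapted ℱ X)
    (hXint : ∀ n, Integrable (X n) μ)
    (x₀ : EuclideanSpace ℝ (Fin q)) (hX0 : X 0 = fun _ => x₀)
    (hw₀ : 0 < ∑ j, a j * x₀ j)
    (hwn : ∀ n : ℕ, ∀ᵐ ω ∂μ, ∑ j, a j * X n ω j = (∑ j, a j * x₀ j) + (n : ℝ) * b)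
    (hcond : ∀ n : ℕ, μ[fun ω => X (n + 1) ω - X n ω | ℱ n] =ᵐ[μ]
      fun ω => ((∑ j, a j * x₀ j) + (n : ℝ) * b)⁻¹ • (Matrix.toEuclideanCLM (𝕜 := ℝ) A (X n ω)))
    (hmom : ∀ p : ℝ, 2 ≤ p →
      (⨆ n : ℕ, eLpNorm (fun ω => X (n + 1) ω - X n ω) (ENNReal.ofReal p) μ) < ⊤)
    (hspec : (b : ℂ) ∈ spectrum ℂ (A.map (fun x : ℝ => (x : ℂ))))
    (hmax : ∀ mu ∈ spectrum ℂ (A.map (fun x : ℝ => (x : ℂ))), mu.re ≤ b)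
    (hsmall : ∀ mu : ℂ, MemSecondEigSet (A.map (fun x : ℝ => (x : ℂ))) b mu → mu.re < b / 2)
    (Sig : Matrix (Fin q) (Fin q) ℝ) (hSig : Sig.PosSemidef)
    (νlim : Measure (EuclideanSpace ℝ (Fin q))) (hνlim : IsProbabilityMeasure νlim)
    (hGauss : ∀ l : Fin q → ℝ,
      Measure.map (fun x : EuclideanSpace ℝ (Fin q) => ∑ j, l j * x j) νlim =
        ProbabilityTheory.gaussianReal 0 (Real.toNNReal (∑ i, ∑ j, l i * Sig i j * l j)))
    (hconv : ∀ f : BoundedContinuousFunction (EuclideanSpace ℝ (Fin q)) ℝ,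
      Tendsto (fun n : ℕ =>
          ∫ ω, f ((1 / Real.sqrt n) • (X n ω - ∫ ω', X n ω' ∂μ)) ∂μ)
        atTop (nhds (∫ x, f x ∂νlim))) :
    (∀ r : ℝ, 1 ≤ r →
      Tendsto (fun n : ℕ =>
          ∫ ω, ‖(1 / Real.sqrt n) • (X n ω - ∫ ω', X n ω' ∂μ)‖ ^ r ∂μ)
        atTop (nhds (∫ x, ‖x‖ ^ r ∂νlim))) ∧
    (∀ α : Fin q → ℕ,
      Tendsto (fun n : ℕ =>
          ∫ ω, ∏ j, ((1 / Real.sqrt n) • (X n ω - ∫ ω', X n ω' ∂μ) : EuclideanSpace ℝ (Fin q)) j ^ α j ∂μ)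
        atTop (nhds (∫ x : EuclideanSpace ℝ (Fin q), ∏ j, x j ^ α j ∂νlim))) ∧
    (∀ i j : Fin q,
      Tendsto (fun n : ℕ =>
          (∫ ω, (X n ω i - (∫ ω', X n ω' ∂μ) i) * (X n ω j - (∫ ω', X n ω' ∂μ) j) ∂μ) / (n : ℝ))
        atTop (nhds (Sig i j))) := by
  set w : ℝ := ∑ j, a j * x₀ j with hw
  have hq0 : 0 < q := by omega
  have hsq : 0 < a ⬝ᵥ a := by
    rcases (dotProduct_self_star_nonneg a).lt_or_eq with h | h
    · simpa using h
    · exfalso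
      have h0 : a = 0 := by
        have : a ⬝ᵥ a = 0 := by simpa using h.symm
        exact dotProduct_self_eq_zero.1 this
      simp [hw, h0] at hw₀
  set v : Fin q → ℝ := (b / (a ⬝ᵥ a)) • a with hv
  have hav : a ⬝ᵥ v = b := by
    rw [hv, dotProduct_smul, smul_eq_mul, div_mul_cancel₀ _ hsq.ne']
  set B : Matrix (Fin q) (Fin q) ℝ := A - vecMulVec v a with hB
  have hspecB : ∀ mu ∈ spectrum ℂ (B.map (fun x : ℝ => (x : ℂ))), mu.re < b / 2 := by
    have e : B.map (fun x : ℝ => (x : ℂ)) = A.map (fun x : ℝ => (x : ℂ)) -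
        vecMulVec (fun i => (v i : ℂ)) (fun i => (a i : ℂ)) := by
      ext i j; simp [hB, vecMulVec_apply]
    rw [e]
    refine urn_spec _ _ _ b hb ?_ ?_ hsmall
    · ext j
      have := congrFun hA j
      simp only [vecMul, dotProduct, Pi.smul_apply, smul_eq_mul, Matrix.map_apply] at this ⊢
      exact_mod_cast this
    · simp only [dotProduct] at hav ⊢
      exact_mod_cast hav
  obtain ⟨δ, β, hδ, hβ0, hβ, F, i1, i2, i3, J, hJ1, hJ2⟩ :=
    urn_lyap hq0 B (b / 2) (by linarith) hspecB
  have hAB : ∀ x : EuclideanSpace ℝ (Fin q), ∑ j, a j * x j = 0 →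
      toEuclideanCLM (𝕜 := ℝ) A x = toEuclideanCLM (𝕜 := ℝ) B x := by
    intro x hx
    rw [hB, map_sub, _root_.sub_apply]
    have : toEuclideanCLM (𝕜 := ℝ) (vecMulVec v a) x = 0 := by
      ext i
      rw [Matrix.ofLp_toEuclideanCLM]
      have : a ⬝ᵥ x.ofLp = 0 := hx
      simp [vecMulVec_mulVec, this]
    rw [this, sub_zero]
  have hXs : ∀ n, StronglyMeasurable[ℱ n] (X n) := fun n => (hadp n).stronglyMeasurable
  let l : EuclideanSpace ℝ (Fin q) →L[ℝ] ℝ := ∑ j, a j • EuclideanSpace.proj j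
  have hl : ∀ x, l x = ∑ j, a j * x j := by
    intro x; simp [l]
  have hH : ∀ n : ℕ, ∀ᵐ ω ∂μ, ∑ j, a j * (X n ω - ∫ ω', X n ω' ∂μ : EuclideanSpace ℝ (Fin q)) j
      = 0 := by
    intro n
    have h1 : l (∫ ω', X n ω' ∂μ) = w + (n : ℝ) * b := by
      rw [← l.integral_comp_comm (hXint n)]
      have : (fun ω => l (X n ω)) =ᵐ[μ] fun _ => w + (n : ℝ) * b := by
        filter_upwards [hwn n] with ω h
        rw [hl, h]
      rw [integral_congr_ae this]
      simp
    filter_upwards [hwn n] with ω h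
    rw [← hl, map_sub, h1, hl, h, sub_self]
  have hmoments := fun k : ℕ => urn_moment μ ℱ (toEuclideanCLM (𝕜 := ℝ) A) J
    (fun x => ∑ j, a j * x j = 0) w b δ β hw₀ hb hδ hβ0 hβ hJ1
    (fun s hs hsδ x hx => by rw [hAB x hx]; exact hJ2 s hs hsδ x) X hXs x₀ hX0 hH hcond k
    (by
      have := hmom ((2 * (k + 1) : ℕ) : ℝ) (by push_cast; nlinarith [Nat.cast_nonneg (α := ℝ) k])
      rwa [ENNReal.ofReal_natCast] at this)
  set Z : ℕ → Ω → EuclideanSpace ℝ (Fin q) :=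
    fun n ω => (1 / Real.sqrt n) • (X n ω - ∫ ω', X n ω' ∂μ) with hZdef
  have hZs : ∀ n, StronglyMeasurable (Z n) := fun n =>
    (((hXs n).mono (ℱ.le n)).sub
      (stronglyMeasurable_const (b := ∫ ω', X n ω' ∂μ))).const_smul (1 / Real.sqrt n)
  have hZm : ∀ k n, MemLp (Z n) (2 * (k + 1) : ℕ) μ := fun k n =>
    (((hmoments k).1 n).sub (memLp_const (∫ ω', X n ω' ∂μ))).const_smul (1 / Real.sqrt n)
  have hZK : ∀ k : ℕ, ∃ K : ℝ, ∀ᶠ n : ℕ in atTop, ∫ ω, ‖Z n ω‖ ^ (2 * (k + 1)) ∂μ ≤ K := by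
    intro k
    obtain ⟨K, hK⟩ := (hmoments k).2
    refine ⟨K, ?_⟩
    filter_upwards [hK, eventually_ge_atTop 1] with n hn hn1
    have hn0 : (0:ℝ) < n := by exact_mod_cast hn1
    have e : ∀ ω, ‖Z n ω‖ ^ (2 * (k + 1)) = ((n : ℝ) ^ (k + 1))⁻¹ *
        ‖X n ω - ∫ ω', X n ω' ∂μ‖ ^ (2 * (k + 1)) := by
      intro ω
      rw [hZdef]
      simp only [norm_smul, mul_pow]
      congr 1
      rw [Real.norm_of_nonneg (by positivity), pow_mul, one_div, inv_pow,
        Real.sq_sqrt hn0.le, inv_pow]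
    simp_rw [e]
    rw [integral_const_mul, inv_mul_le_iff₀ (by positivity)]
    linarith
  have main : ∀ (f : EuclideanSpace ℝ (Fin q) → ℝ) (k : ℕ), Continuous f →
      (∀ x, f x ^ 2 ≤ 1 + ‖x‖ ^ (2 * (k + 1))) →
      Integrable f νlim ∧
      Tendsto (fun n : ℕ => ∫ ω, f (Z n ω) ∂μ) atTop (nhds (∫ x, f x ∂νlim)) := by
    intro f k hf hfk
    obtain ⟨K, hK⟩ := hZK k
    have hi : ∀ n, Integrable (fun ω => 1 + ‖Z n ω‖ ^ (2 * (k + 1))) μ := fun n =>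
      (integrable_const (1:ℝ)).add (hZm k n).integrable_norm_pow'
    have hint : ∀ n, Integrable (fun ω => f (Z n ω) ^ 2) μ := by
      intro n
      refine (hi n).mono' ?_ (Eventually.of_forall fun ω => ?_)
      · exact ((hf.pow 2).comp_stronglyMeasurable (hZs n)).aestronglyMeasurable
      · rw [Real.norm_of_nonneg (by positivity)]
        exact hfk _
    refine urn_weak μ νlim Z (fun n => (hZs n).measurable.aemeasurable) hconv f hf (1 + K) hint ?_
    filter_upwards [hK] with n hn
    refine (integral_mono (hint n) (hi n) fun ω => hfk _).trans ?_
    rw [integral_add (integrable_const _) (hZm k n).integrable_norm_pow']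
    simpa using hn
  have hpow : ∀ (t : ℝ) (s : ℝ) (k : ℕ), 0 ≤ t → 0 ≤ s → s ≤ k → t ^ s ≤ 1 + t ^ k := by
    intro t s k ht hs hsk
    have hp : 0 ≤ t ^ k := by positivity
    rcases le_total t 1 with h | h
    · have := Real.rpow_le_one ht h hs
      linarith
    · have := Real.rpow_le_rpow_of_exponent_le h hsk
      rw [Real.rpow_natCast] at this
      linarith
  have hmono : ∀ α : Fin q → ℕ, ∀ x : EuclideanSpace ℝ (Fin q),
      (∏ j, x j ^ α j) ^ 2 ≤ 1 + ‖x‖ ^ (2 * ((∑ j, α j) + 1)) := by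
    intro α x
    have h1 : |∏ j, x j ^ α j| ≤ ‖x‖ ^ (∑ j, α j) := by
      rw [Finset.abs_prod, ← Finset.prod_pow_eq_pow_sum]
      refine Finset.prod_le_prod (fun j _ => abs_nonneg _) fun j _ => ?_
      rw [abs_pow]
      gcongr
      exact PiLp.norm_apply_le x j
    have h2 := pow_le_pow_left₀ (abs_nonneg _) h1 2
    rw [sq_abs, ← pow_mul] at h2
    refine h2.trans ?_
    have := hpow ‖x‖ (((∑ j, α j) * 2 : ℕ) : ℝ) (2 * ((∑ j, α j) + 1)) (norm_nonneg _)
      (by positivity) (by exact_mod_cast (by omega))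
    rwa [Real.rpow_natCast] at this
  refine ⟨fun r hr => ?_, fun α => ?_, fun i j => ?_⟩
  · obtain ⟨k, hk⟩ := exists_nat_ge r
    refine (main (fun x => ‖x‖ ^ r) k ?_ ?_).2
    · exact continuous_norm.rpow_const fun x => Or.inr (by linarith)
    · intro x
      show (‖x‖ ^ r) ^ 2 ≤ _
      rw [← Real.rpow_mul_natCast (norm_nonneg _)]
      refine hpow _ _ _ (norm_nonneg _) (by positivity) ?_
      push_cast
      linarith
  · exact (main (fun x => ∏ j, x j ^ α j) (∑ j, α j) (by fun_prop) (hmono α)).2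
  · have hcoord : ∀ (i j : Fin q) (x : EuclideanSpace ℝ (Fin q)), (x i * x j) ^ 2 ≤
        1 + ‖x‖ ^ (2 * (1 + 1)) := by
      intro i j x
      have h1 : |x i| ≤ ‖x‖ := PiLp.norm_apply_le x i
      have h2 : |x j| ≤ ‖x‖ := PiLp.norm_apply_le x j
      have h3 : |x i * x j| ≤ ‖x‖ * ‖x‖ := by rw [abs_mul]; gcongr
      have h4 := pow_le_pow_left₀ (abs_nonneg _) h3 2
      rw [sq_abs] at h4
      have h5 : ‖x‖ ^ (2 * (1 + 1)) = (‖x‖ * ‖x‖) ^ 2 := by ring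
      rw [h5]; linarith
    have hij := fun i j => main (fun x => x i * x j) 1 (by fun_prop) (hcoord i j)
    have hvar : ∀ l : Fin q → ℝ,
        ∫ x : EuclideanSpace ℝ (Fin q), (∑ j, l j * x j) ^ 2 ∂νlim =
          ∑ i, ∑ j, l i * Sig i j * l j := by
      intro l
      have hmeas : Measurable (fun x : EuclideanSpace ℝ (Fin q) => ∑ j, l j * x j) := by fun_prop
      have h1 := integral_map (μ := νlim) hmeas.aemeasurable (f := fun y : ℝ => y ^ 2)
        (by fun_prop)
      rw [← h1, hGauss l]
      have hnn : 0 ≤ ∑ i, ∑ j, l i * Sig i j * l j := by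
        have := hSig.dotProduct_mulVec_nonneg l
        simpa [dotProduct, mulVec, Finset.mul_sum, mul_assoc] using this
      have h2 := ProbabilityTheory.variance_fun_id_gaussianReal (μ := 0)
        (v := Real.toNNReal (∑ i, ∑ j, l i * Sig i j * l j))
      rw [ProbabilityTheory.variance_of_integral_eq_zero (by fun_prop) (by simp)] at h2
      rw [h2, Real.coe_toNNReal _ hnn]
    have hcov : ∫ x : EuclideanSpace ℝ (Fin q), x i * x j ∂νlim = Sig i j := by
      have hsymm : Sig j i = Sig i j := by
        have := hSig.isHermitian.apply i j
        simpa using this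
      have hs : ∀ i : Fin q, ∫ x : EuclideanSpace ℝ (Fin q), x i * x i ∂νlim = Sig i i := by
        intro i
        have := hvar (Pi.single i 1)
        simpa [Pi.single_apply, pow_two] using this
      have h1 := hvar (Pi.single i 1 + Pi.single j 1)
      have e1 : ∀ x : EuclideanSpace ℝ (Fin q),
          (∑ t, (Pi.single i 1 + Pi.single j 1 : Fin q → ℝ) t * x t) ^ 2 =
          x i * x i + 2 * (x i * x j) + x j * x j := by
        intro x
        simp [Pi.single_apply, add_mul, Finset.sum_add_distrib]
        ring
      have e2 : ∑ s, ∑ t, (Pi.single i 1 + Pi.single j 1 : Fin q → ℝ) s * Sig s t *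
          (Pi.single i 1 + Pi.single j 1 : Fin q → ℝ) t =
          Sig i i + 2 * Sig i j + Sig j j := by
        simp [Pi.single_apply, add_mul, mul_add, Finset.sum_add_distrib]
        rw [hsymm]; ring
      simp_rw [e1] at h1
      have i2 : Integrable (fun x : EuclideanSpace ℝ (Fin q) => x i * x i + 2 * (x i * x j)) νlim :=
        (hij i i).1.add ((hij i j).1.const_mul 2)
      rw [e2, integral_add i2 (hij j j).1, integral_add (hij i i).1 ((hij i j).1.const_mul 2),
        integral_const_mul, hs, hs] at h1
      linarith
    rw [← hcov]
    refine (hij i j).2.congr fun n => ?_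
    rw [← integral_div]
    congr 1
    ext ω
    simp only [hZdef, PiLp.smul_apply, PiLp.sub_apply, smul_eq_mul]
    have : (1 / Real.sqrt n) * (1 / Real.sqrt n) = 1 / (n : ℝ) := by
      rw [div_mul_div_comm, Real.mul_self_sqrt (by positivity), one_mul]
    calc _ = ((1 / Real.sqrt n) * (1 / Real.sqrt n)) *
          ((X n ω i - (∫ ω', X n ω' ∂μ) i) * (X n ω j - (∫ ω', X n ω' ∂μ) j)) := by ring
      _ = _ := by rw [this]; ring
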